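/- Let k ≥ 1 be an integer, let h ∈ SL₂(ℤ_p) with h − 1 ∈ p^{k+1}·M₂(ℤ_p), let v = (p^{−k}a, p^{−k}b) ∈ V with a, b ∈ O_E, let w = c + p^{−1}d·δ with c, d ∈ O_E, and set ν = N_{D/F}(w) = c·c̄ − p^{−1}·d·d̄. Then χ(Tr_{E/F}(⟨v, c(h)v⟩ · ν)) = ψ(tr(b₁·(h − 1))), where c(h) = (1 − h)(1 + h)^{−1} and b₁ is the traceless matrix b₁ = −(p^{−k+2}/2)·ν·[[−p^{−k−1}(āb + ab̄), 2p^{−k−1}a·ā],[−2p^{−k−1}b·b̄, p^{−k−1}(ab̄ + āb)]] ∈ M₂(F). -/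

import Mathlib

/-!
Write `h = 1 + g`. Since `det h = 1`, we have `tr g = -det g`, and Cayley–Hamilton gives
`c(h) = (4 - det g)⁻¹ (tr g - 2g)`. The pairing `⟨v, (tr g - 2g)v⟩` equals `-tr(μ(v)g)` for the
traceless matrix `μ(v)` attached to `v` by the moment map, and `b₁ = -(p/2) ν μ(v)`. So the
arguments of `ψ` on the two sides differ by `-p ν tr(μ(v)g) (2/(4 - det g) - 1/2)`, that is by
`-p ν tr(μ(v)g) det g / (2(4 - det g))`. Here `pν`, `p^{2k} μ(v)`, `p^{-k-1} g` and
`p^{-2k-2} det g` are integral and `2(4 - det g)` divides `p^{k+2}`, so this difference lies in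
`pℤ_p`, where `ψ` is trivial.
-/

noncomputable section
open Matrix

/-- The image of `p` in `E`. -/
def pE (p : ℕ) [Fact p.Prime] (E : Type) [Field E] [Algebra ℚ_[p] E] : E :=
  algebraMap ℚ_[p] E (p : ℚ_[p])

/-- The ring of integers `O_E = ℤ_p + ℤ_p·α` of the unramified quadratic extension
`E = F(α)`, as a set. -/
def OE (p : ℕ) [Fact p.Prime] (E : Type) [Field E] [Algebra ℚ_[p] E] (α : E) : Set E :=
  {x | ∃ a b : ℤ_[p],
    x = algebraMap ℚ_[p] E (a : ℚ_[p]) + algebraMap ℚ_[p] E (b : ℚ_[p]) * α}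

/-- The element `x_{a,b} = !![a, b; p·conj b, conj a]` of the quaternion division algebra
`D ⊆ M₂(E)`. -/
def qmat (p : ℕ) [Fact p.Prime] (E : Type) [Field E] [Algebra ℚ_[p] E]
    (conj : E → E) (a b : E) : Matrix (Fin 2) (Fin 2) E :=
  !![a, b; pE p E * conj b, conj a]

/-- The uniformizer `δ = x_{0,1}` of `D`, with `δ² = p`. -/
def deltaM (p : ℕ) [Fact p.Prime] (E : Type) [Field E] [Algebra ℚ_[p] E] :
    Matrix (Fin 2) (Fin 2) E :=
  !![0, 1; pE p E, 0]

/-- The maximal order `O_D = {x_{a,b} : a, b ∈ O_E}` of `D`, as a set. -/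
def ODset (p : ℕ) [Fact p.Prime] (E : Type) [Field E] [Algebra ℚ_[p] E]
    (α : E) (conj : E → E) : Set (Matrix (Fin 2) (Fin 2) E) :=
  {m | ∃ a b : E, a ∈ OE p E α ∧ b ∈ OE p E α ∧ m = qmat p E conj a b}

/-- The norm-one group `D¹ = {x ∈ D : det x = 1}`, as a set. -/
def D1set (p : ℕ) [Fact p.Prime] (E : Type) [Field E] [Algebra ℚ_[p] E]
    (conj : E → E) : Set (Matrix (Fin 2) (Fin 2) E) :=
  {m | (∃ a b : E, m = qmat p E conj a b) ∧ m.det = 1}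

/-- `vDge p E α conj r m` says `v_D(m) ≥ r`, i.e. `m ∈ δ^r·O_D = P_D^r`. -/
def vDge (p : ℕ) [Fact p.Prime] (E : Type) [Field E] [Algebra ℚ_[p] E]
    (α : E) (conj : E → E) (r : ℕ) (m : Matrix (Fin 2) (Fin 2) E) : Prop :=
  ∃ yy ∈ ODset p E α conj, m = deltaM p E ^ r * yy

/-- `x ∈ P_E = p·O_E`. -/
def inPE (p : ℕ) [Fact p.Prime] (E : Type) [Field E] [Algebra ℚ_[p] E]
    (α : E) (x : E) : Prop :=
  ∃ c ∈ OE p E α, x = pE p E * c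

/-- The pure tensor `v ⊗ w ∈ 𝒲 = V ⊗_E W` in coordinates: `(v ⊗ w) i j = v i · conj (w j)`
(the `E`-structure on `W`-coordinates is twisted by conjugation, so that the symplectic
form below is well defined on `𝒲`).  Here `w = (c, d)` stands for `c + d·δ ∈ W = D`. -/
def tens (E : Type) [Field E] (conj : E → E) (v w : Fin 2 → E) :
    Matrix (Fin 2) (Fin 2) E :=
  Matrix.of fun i j => v i * conj (w j)

/-- The symplectic form `⟨⟨x, y⟩⟩ = Tr_{E/F}(⟨v,v'⟩·conj(⟨w,w'⟩'))` of `𝒲`, written in the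
coordinates above, with values `t + conj t` landing in (the image of) `F`. -/
def sympE (p : ℕ) [Fact p.Prime] (E : Type) [Field E] [Algebra ℚ_[p] E]
    (conj : E → E) (x y : Matrix (Fin 2) (Fin 2) E) : E :=
  (x 0 0 * conj (y 1 0) - pE p E * (x 0 1 * conj (y 1 1))
      - x 1 0 * conj (y 0 0) + pE p E * (x 1 1 * conj (y 0 1)))
    + conj (x 0 0 * conj (y 1 0) - pE p E * (x 0 1 * conj (y 1 1))
      - x 1 0 * conj (y 0 0) + pE p E * (x 1 1 * conj (y 0 1)))

/-- The lattice `A = Γ ⊗ Γ'`: the `O_E`-span (= additive span) of the pure tensors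
`v ⊗ w` with `v ∈ Γ = O_E²` and `w ∈ Γ' = O_E + O_E·δ`. -/
def Alat (p : ℕ) [Fact p.Prime] (E : Type) [Field E] [Algebra ℚ_[p] E]
    (α : E) (conj : E → E) : AddSubgroup (Matrix (Fin 2) (Fin 2) E) :=
  AddSubgroup.closure
    {m | ∃ v w : Fin 2 → E, (∀ i, v i ∈ OE p E α) ∧ (∀ j, w j ∈ OE p E α) ∧
      m = tens E conj v w}

/-- `x` lies in (the image in `E` of) `ℤ_p`. -/
def integralF (p : ℕ) [Fact p.Prime] (E : Type) [Field E] [Algebra ℚ_[p] E]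
    (x : E) : Prop :=
  ∃ s : ℤ_[p], x = algebraMap ℚ_[p] E ((s : ℚ_[p]))

/-- The dual lattice `L* = {z ∈ 𝒲 : ⟨⟨z, l⟩⟩ ∈ ℤ_p for all l ∈ L}`. -/
def dualLat (p : ℕ) [Fact p.Prime] (E : Type) [Field E] [Algebra ℚ_[p] E]
    (α : E) (conj : E → E) (L : Set (Matrix (Fin 2) (Fin 2) E)) :
    Set (Matrix (Fin 2) (Fin 2) E) :=
  {zz | ∀ l ∈ L, integralF p E (sympE p E conj zz l)}

/-- The entrywise embedding `M₂(ℤ_p) → M₂(E)`. -/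
def toE (p : ℕ) [Fact p.Prime] (E : Type) [Field E] [Algebra ℚ_[p] E]
    (m : Matrix (Fin 2) (Fin 2) ℤ_[p]) : Matrix (Fin 2) (Fin 2) E :=
  m.map fun t => algebraMap ℚ_[p] E (t : ℚ_[p])

/-- The Cayley transform `c(m) = (1 - m)(1 + m)⁻¹`. -/
def cay {E : Type} [Field E] (m : Matrix (Fin 2) (Fin 2) E) : Matrix (Fin 2) (Fin 2) E :=
  (1 - m) * (1 + m)⁻¹

/-- The skew-Hermitian form `⟨x, y⟩ = x₁·conj y₂ - x₂·conj y₁` on `V = E²`. -/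
def sesqV (E : Type) [Field E] (conj : E → E) (x y : Fin 2 → E) : E :=
  x 0 * conj (y 1) - x 1 * conj (y 0)

/-- `Tr_{E/F}(x) = x + conj x`, as an element of `E`. -/
def trEl (E : Type) [Field E] (conj : E → E) (x : E) : E := x + conj x

section Cayley

theorem det_one_add_fin_two {R : Type*} [CommRing R] (g : Matrix (Fin 2) (Fin 2) R) :
    (1 + g).det = 1 + g.trace + g.det := by
  simp only [det_fin_two, trace_fin_two, Matrix.add_apply, one_apply_eq, one_apply_ne, ne_eq,
    zero_ne_one, one_ne_zero, not_false_eq_true, zero_add]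
  ring

theorem trace_eq_neg_det_of_det_one_add {R : Type*} [CommRing R] {g : Matrix (Fin 2) (Fin 2) R}
    (hdet : (1 + g).det = 1) : g.trace = -g.det := by
  linear_combination hdet - det_one_add_fin_two g

theorem det_one_add_one_add {R : Type*} [CommRing R] {g : Matrix (Fin 2) (Fin 2) R}
    (hdet : (1 + g).det = 1) : (1 + (1 + g)).det = 4 - g.det := by
  rw [det_one_add_fin_two, hdet, trace_add, trace_one,
    trace_eq_neg_det_of_det_one_add hdet, Fintype.card_fin]
  ring

theorem adjugate_add_fin_two {R : Type*} [CommRing R] (m n : Matrix (Fin 2) (Fin 2) R) :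
    (m + n).adjugate = m.adjugate + n.adjugate := by
  ext i j
  fin_cases i <;> fin_cases j <;> simp [adjugate_fin_two, add_comm]

theorem neg_mul_adjugate_two_add {R : Type*} [CommRing R] (g : Matrix (Fin 2) (Fin 2) R) :
    -g * (1 + (1 + g)).adjugate = -g.det • 1 - (2 : R) • g := by
  rw [adjugate_add_fin_two, adjugate_add_fin_two, adjugate_one, mul_add, mul_add, mul_one,
    Matrix.neg_mul, mul_adjugate]
  module

theorem cay_one_add {E : Type} [Field E] {g : Matrix (Fin 2) (Fin 2) E}
    (hdet : (1 + g).det = 1) :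
    cay (1 + g) = (4 - g.det)⁻¹ • (g.trace • 1 - (2 : E) • g) := by
  rw [cay, sub_add_cancel_left, inv_def, Ring.inverse_eq_inv', det_one_add_one_add hdet,
    Matrix.mul_smul, neg_mul_adjugate_two_add, trace_eq_neg_det_of_det_one_add hdet]

end Cayley

section MomentMap

/-- The moment map of the action of `SL₂` on the skew-Hermitian space `E²`: the traceless matrix
`μ(v)` with `⟨v, (tr g - 2g)v⟩ = -tr(μ(v)g)` for every `g ∈ M₂(F)`. -/
def momentMatrix {E : Type*} [CommRing E] (conj : E → E) (v : Fin 2 → E) :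
    Matrix (Fin 2) (Fin 2) E :=
  !![-(conj (v 0) * v 1 + v 0 * conj (v 1)), 2 * (v 0 * conj (v 0));
     -(2 * (v 1 * conj (v 1))), v 0 * conj (v 1) + conj (v 0) * v 1]

theorem trace_momentMatrix {E : Type*} [CommRing E] (conj : E → E) (v : Fin 2 → E) :
    (momentMatrix conj v).trace = 0 := by
  rw [momentMatrix, trace_fin_two_of]
  ring

theorem momentMatrix_smul {E : Type*} [CommRing E] {conj : E →+* E} {r : E} (hr : conj r = r)
    (v : Fin 2 → E) : momentMatrix conj (r • v) = r ^ 2 • momentMatrix conj v := by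
  ext i j
  fin_cases i <;> fin_cases j <;> simp [momentMatrix, hr] <;> ring

variable {E : Type} [Field E] {conj : E →+* E} {g : Matrix (Fin 2) (Fin 2) E}

theorem sesqV_trace_sub_two_smul_mulVec (hg : ∀ i j, conj (g i j) = g i j) (v : Fin 2 → E) :
    sesqV E conj v ((g.trace • 1 - (2 : E) • g) *ᵥ v) = -(momentMatrix conj v * g).trace := by
  have h2 : conj 2 = 2 := map_ofNat conj 2
  simp only [sesqV, momentMatrix, mulVec, dotProduct, mul_apply, Fin.sum_univ_two, trace_fin_two,
    Matrix.sub_apply, Matrix.smul_apply, smul_eq_mul, one_apply_eq, one_apply_ne, ne_eq,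
    zero_ne_one, one_ne_zero, not_false_eq_true, of_apply, cons_val', cons_val_fin_one,
    cons_val_zero, cons_val_one, map_add, map_sub, map_mul, map_one, map_zero, hg, h2]
  ring

theorem sesqV_smul_mulVec {r : E} (hr : conj r = r) (m : Matrix (Fin 2) (Fin 2) E)
    (v : Fin 2 → E) : sesqV E conj v ((r • m) *ᵥ v) = r * sesqV E conj v (m *ᵥ v) := by
  simp only [sesqV, smul_mulVec, Pi.smul_apply, smul_eq_mul, map_mul, hr]
  ring

theorem sesqV_cay_one_add_mulVec (hdet : (1 + g).det = 1) (hg : ∀ i j, conj (g i j) = g i j)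
    (v : Fin 2 → E) :
    sesqV E conj v (cay (1 + g) *ᵥ v) =
      -((4 - g.det)⁻¹ * (momentMatrix conj v * g).trace) := by
  have h4 : conj 4 = 4 := map_ofNat conj 4
  have hr : conj (4 - g.det)⁻¹ = (4 - g.det)⁻¹ := by simp [det_fin_two, hg, h4]
  rw [cay_one_add hdet, sesqV_smul_mulVec hr, sesqV_trace_sub_two_smul_mulVec hg, mul_neg]

end MomentMap

section Integrality

theorem sq_dvd_det_fin_two {R : Type*} [CommRing R] {r : R} {g : Matrix (Fin 2) (Fin 2) R}
    (hg : ∀ i j, r ∣ g i j) : r ^ 2 ∣ g.det := by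
  rw [det_fin_two, sq]
  exact dvd_sub (mul_dvd_mul (hg 0 0) (hg 1 1)) (mul_dvd_mul (hg 0 1) (hg 1 0))

theorem dvd_trace_mul {n R : Type*} [Fintype n] [CommSemiring R] {r : R} (m : Matrix n n R)
    {g : Matrix n n R} (hg : ∀ i j, r ∣ g i j) : r ∣ (m * g).trace :=
  Finset.dvd_sum fun i _ => Finset.dvd_sum fun j _ => (hg j i).mul_left (m i j)

variable {p : ℕ} [Fact p.Prime]

theorem isUnit_two_padicInt (hp : p ≠ 2) : IsUnit (2 : ℤ_[p]) := by
  rw [← Nat.cast_ofNat, PadicInt.isUnit_iff, PadicInt.norm_natCast_eq_one_iff]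
  exact (Nat.coprime_primes Fact.out Nat.prime_two).2 hp

theorem isUnit_one_sub_p_mul (x : ℤ_[p]) : IsUnit (1 - (p : ℤ_[p]) * x) :=
  IsLocalRing.isUnit_one_sub_self_of_mem_nonunits _ <|
    Ideal.mul_mem_right x (IsLocalRing.maximalIdeal ℤ_[p]) PadicInt.p_nonunit

-- For `p = 2` the left side is `8` times a unit, and `k + 2 ≥ 3`.
theorem two_mul_four_sub_dvd_p_pow {k : ℕ} (hpk : p ≠ 2 ∨ k ≠ 0) {D : ℤ_[p]}
    (hD : ((p : ℤ_[p]) ^ (k + 1)) ^ 2 ∣ D) : 2 * (4 - D) ∣ (p : ℤ_[p]) ^ (k + 2) := by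
  obtain ⟨x, rfl⟩ := hD
  by_cases hp : p = 2
  · obtain ⟨j, rfl⟩ := Nat.exists_eq_add_one_of_ne_zero (hpk.resolve_left (not_not.2 hp))
    have hp2 : (p : ℤ_[p]) = 2 := by exact_mod_cast congrArg (Nat.cast (R := ℤ_[p])) hp
    obtain ⟨u, hu⟩ := (isUnit_one_sub_p_mul ((p : ℤ_[p]) ^ (2 * j + 1) * x)).exists_right_inv
    refine ⟨2 ^ j * u, ?_⟩
    rw [hp2] at hu ⊢
    linear_combination -(2 : ℤ_[p]) ^ (j + 3) * hu
  · have h2 := isUnit_two_padicInt hp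
    obtain ⟨e, he⟩ := h2.exists_right_inv
    have h1 := isUnit_one_sub_p_mul ((p : ℤ_[p]) ^ (2 * k + 1) * (x * e ^ 2))
    have h4 : 4 - ((p : ℤ_[p]) ^ (k + 1)) ^ 2 * x =
        2 * 2 * (1 - p * ((p : ℤ_[p]) ^ (2 * k + 1) * (x * e ^ 2))) := by
      linear_combination (p : ℤ_[p]) ^ (2 * k + 2) * x * (1 + 2 * e) * he
    rw [h4]
    exact (h2.mul ((h2.mul h2).mul h1)).dvd

variable {E : Type} [Field E] [Algebra ℚ_[p] E]

theorem toE_eq_mapMatrix (m : Matrix (Fin 2) (Fin 2) ℤ_[p]) :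
    toE p E m = ((algebraMap ℚ_[p] E).comp PadicInt.Coe.ringHom).mapMatrix m :=
  rfl

theorem toE_one_add (m : Matrix (Fin 2) (Fin 2) ℤ_[p]) : toE p E (1 + m) = 1 + toE p E m := by
  simp only [toE_eq_mapMatrix, map_add, map_one]

theorem det_toE (m : Matrix (Fin 2) (Fin 2) ℤ_[p]) :
    (toE p E m).det = algebraMap ℚ_[p] E (m.det : ℚ_[p]) :=
  (RingHom.map_det ((algebraMap ℚ_[p] E).comp PadicInt.Coe.ringHom) m).symm

theorem trace_toE_mul (m n : Matrix (Fin 2) (Fin 2) ℤ_[p]) :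
    (toE p E m * toE p E n).trace = algebraMap ℚ_[p] E ((m * n).trace : ℚ_[p]) := by
  rw [toE_eq_mapMatrix, toE_eq_mapMatrix, ← map_mul]
  exact (AddMonoidHom.map_trace ((algebraMap ℚ_[p] E).comp PadicInt.Coe.ringHom) (m * n)).symm

theorem trEl_algebraMap (conj : E →ₐ[ℚ_[p]] E) (t : ℚ_[p]) :
    trEl E conj (algebraMap ℚ_[p] E t) = algebraMap ℚ_[p] E (2 * t) := by
  rw [trEl, AlgHom.commutes, ← map_add, two_mul]

variable {z : ℤ_[p]} {α : E} {conj : E →ₐ[ℚ_[p]] E}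

theorem integralF_mul_conj_add (hα : α * α = algebraMap ℚ_[p] E (z : ℚ_[p]))
    (hconj : conj α = -α) {a b : E} (ha : a ∈ OE p E α) (hb : b ∈ OE p E α) :
    integralF p E (a * conj b + conj a * b) := by
  obtain ⟨x, y, rfl⟩ := ha
  obtain ⟨x', y', rfl⟩ := hb
  refine ⟨x * x' - y * y' * z + (x * x' - y * y' * z), ?_⟩
  push_cast
  simp only [map_add, map_mul, AlgHom.commutes, hconj, ← hα]
  ring

theorem integralF_mul_conj (hα : α * α = algebraMap ℚ_[p] E (z : ℚ_[p]))
    (hconj : conj α = -α) {a : E} (ha : a ∈ OE p E α) : integralF p E (a * conj a) := by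
  obtain ⟨x, y, rfl⟩ := ha
  refine ⟨x * x - y * y * z, ?_⟩
  push_cast
  simp only [map_add, map_mul, AlgHom.commutes, hconj, ← hα]
  ring

theorem exists_momentMatrix_eq_toE (hα : α * α = algebraMap ℚ_[p] E (z : ℚ_[p]))
    (hconj : conj α = -α) {v : Fin 2 → E} (hv : ∀ i, v i ∈ OE p E α) :
    ∃ N, momentMatrix conj v = toE p E N := by
  obtain ⟨s, hs⟩ := integralF_mul_conj_add hα hconj (hv 0) (hv 1)
  obtain ⟨n₀, hn₀⟩ := integralF_mul_conj hα hconj (hv 0)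
  obtain ⟨n₁, hn₁⟩ := integralF_mul_conj hα hconj (hv 1)
  refine ⟨!![-s, n₀ + n₀; -(n₁ + n₁), s], ?_⟩
  rw [momentMatrix, add_comm (conj (v 0) * v 1), hs, hn₀, hn₁]
  ext i j
  fin_cases i <;> fin_cases j <;> simp [toE, two_mul]

theorem exists_trace_momentMatrix_mul_eq (hα : α * α = algebraMap ℚ_[p] E (z : ℚ_[p]))
    (hconj : conj α = -α) {a b : E} (ha : a ∈ OE p E α) (hb : b ∈ OE p E α) {k : ℕ}
    {G : Matrix (Fin 2) (Fin 2) ℤ_[p]} (hG : ∀ i j, (p : ℤ_[p]) ^ (k + 1) ∣ G i j) :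
    ∃ s : ℤ_[p],
      (momentMatrix conj ((pE p E)⁻¹ ^ k • ![a, b]) * toE p E G).trace =
        algebraMap ℚ_[p] E ((p : ℚ_[p])⁻¹ ^ (2 * k) * (p ^ (k + 1) * s)) := by
  obtain ⟨N, hN⟩ := exists_momentMatrix_eq_toE (v := ![a, b]) hα hconj
    (Fin.forall_fin_two.2 ⟨ha, hb⟩)
  obtain ⟨s, hs⟩ := dvd_trace_mul N hG
  have hμ := momentMatrix_smul (conj := (conj : E →+* E)) (r := (pE p E)⁻¹ ^ k)
    (by simp [pE]) ![a, b]
  rw [RingHom.coe_coe, hN] at hμ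
  refine ⟨s, ?_⟩
  rw [hμ, Matrix.smul_mul, trace_smul, trace_toE_mul, hs, pE]
  simp [← pow_mul, mul_comm]

theorem exists_quaternionNorm_eq (hα : α * α = algebraMap ℚ_[p] E (z : ℚ_[p]))
    (hconj : conj α = -α) {c d : E} (hc : c ∈ OE p E α) (hd : d ∈ OE p E α) :
    ∃ m : ℤ_[p], c * conj c - (pE p E)⁻¹ * (d * conj d) =
      algebraMap ℚ_[p] E ((p : ℚ_[p])⁻¹ * m) := by
  obtain ⟨nc, hnc⟩ := integralF_mul_conj hα hconj hc
  obtain ⟨nd, hnd⟩ := integralF_mul_conj hα hconj hd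
  have hp0 : (p : ℚ_[p]) ≠ 0 := NeZero.ne _
  refine ⟨p * nc - nd, ?_⟩
  rw [hnc, hnd, pE, ← map_inv₀, ← map_mul, ← map_sub]
  congr 1
  push_cast
  field_simp

end Integrality

section Comparison

variable {p : ℕ} [Fact p.Prime] {E : Type} [Field E] [Algebra ℚ_[p] E]

theorem smul_eq_smul_momentMatrix (conj : E →ₐ[ℚ_[p]] E) (a b ν : E) (k : ℕ) :
    (-(pE p E ^ 2 * (pE p E)⁻¹ ^ k * (2 : E)⁻¹ * ν)) •
      !![-((pE p E)⁻¹ ^ (k + 1)) * (conj a * b + a * conj b),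
           2 * (pE p E)⁻¹ ^ (k + 1) * (a * conj a);
         -(2 * (pE p E)⁻¹ ^ (k + 1) * (b * conj b)),
           (pE p E)⁻¹ ^ (k + 1) * (a * conj b + conj a * b)] =
      -(pE p E * 2⁻¹ * ν) • momentMatrix conj ((pE p E)⁻¹ ^ k • ![a, b]) := by
  have hp0 : pE p E ≠ 0 := (map_ne_zero _).2 (NeZero.ne _)
  have hconjp : conj (pE p E) = pE p E := conj.commutes _
  ext i j
  fin_cases i <;> fin_cases j <;> simp [momentMatrix, hconjp] <;> field_simp <;> ring

theorem trEl_sesqV_cay_mul (conj : E →ₐ[ℚ_[p]] E) {G : Matrix (Fin 2) (Fin 2) ℤ_[p]}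
    (hdet : (1 + G).det = 1) {v : Fin 2 → E} {t : ℚ_[p]}
    (ht : (momentMatrix conj v * toE p E G).trace = algebraMap ℚ_[p] E t) (n : ℚ_[p]) :
    trEl E conj (sesqV E conj v (cay (toE p E (1 + G)) *ᵥ v) * algebraMap ℚ_[p] E n) =
      algebraMap ℚ_[p] E (2 * (-((4 - (G.det : ℚ_[p]))⁻¹ * t) * n)) := by
  have hdetE : (1 + toE p E G).det = 1 := by
    rw [← toE_one_add, det_toE, hdet, PadicInt.coe_one, map_one]
  have hpair := sesqV_cay_one_add_mulVec (conj := (conj : E →+* E)) hdetE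
    (fun i j => conj.commutes (G i j)) v
  simp only [RingHom.coe_coe] at hpair
  rw [toE_one_add, hpair, ht, det_toE, ← trEl_algebraMap conj]
  simp only [map_mul, map_neg, map_inv₀, map_sub, map_ofNat]

theorem exists_two_div_four_sub_expansion {k : ℕ} (hpk : p ≠ 2 ∨ k ≠ 0) {D m s : ℤ_[p]}
    (hD : ((p : ℤ_[p]) ^ (k + 1)) ^ 2 ∣ D) {n t : ℚ_[p]} (hn : n = (p : ℚ_[p])⁻¹ * m)
    (ht : t = (p : ℚ_[p])⁻¹ ^ (2 * k) * (p ^ (k + 1) * s)) :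
    ∃ r : ℤ_[p],
      (p : ℚ_[p]) * (2 * (-((4 - (D : ℚ_[p]))⁻¹ * t) * n)) = -(p * 2⁻¹ * n) * t + p * r := by
  obtain ⟨y, hy⟩ := two_mul_four_sub_dvd_p_pow hpk hD
  obtain ⟨x, rfl⟩ := hD
  have hp0 : (p : ℚ_[p]) ≠ 0 := NeZero.ne _
  set D : ℤ_[p] := ((p : ℤ_[p]) ^ (k + 1)) ^ 2 * x with hDx
  have hyQ : (p : ℚ_[p]) ^ (k + 2) = 2 * (4 - (D : ℚ_[p])) * y := by
    exact_mod_cast congrArg ((↑) : ℤ_[p] → ℚ_[p]) hy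
  have h4 : 4 - (D : ℚ_[p]) ≠ 0 := fun h0 =>
    pow_ne_zero (k + 2) hp0 (by rw [hyQ, h0, mul_zero, zero_mul])
  have hnt : (p : ℚ_[p]) * n * t * D = p ^ (k + 2) * p * (m * s * x) := by
    rw [hn, ht, hDx, inv_pow]
    push_cast
    field_simp
    ring
  refine ⟨-(m * s * x * y), ?_⟩
  calc (p : ℚ_[p]) * (2 * (-((4 - (D : ℚ_[p]))⁻¹ * t) * n))
      = -(p * 2⁻¹ * n) * t - p * n * t * D / (2 * (4 - (D : ℚ_[p]))) := by
        field_simp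
        ring
    _ = -(p * 2⁻¹ * n) * t + p * (-(m * s * x * y) : ℤ_[p]) := by
        rw [hnt, hyQ]
        push_cast
        field_simp
        ring

end Comparison

theorem stmt16_general {p : ℕ} [Fact p.Prime] {z : ℤ_[p]} {E : Type} [Field E]
    [Algebra ℚ_[p] E] {α : E} (hα : α * α = algebraMap ℚ_[p] E (z : ℚ_[p]))
    {conj : E →ₐ[ℚ_[p]] E} (hconj : conj α = -α)
    {TrF : E → ℚ_[p]} (hTrF : ∀ t : ℚ_[p], TrF (algebraMap ℚ_[p] E t) = t)
    {M : Type*} [Monoid M] {ψ : AddChar ℚ_[p] M}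
    (hψ : ∀ t : ℤ_[p], ψ ((p : ℚ_[p]) * (t : ℚ_[p])) = 1)
    {k : ℕ} (hpk : p ≠ 2 ∨ k ≠ 0) (h : SpecialLinearGroup (Fin 2) ℤ_[p])
    (hh : ∀ i j, (p : ℤ_[p]) ^ (k + 1) ∣ ((h : Matrix (Fin 2) (Fin 2) ℤ_[p]) - 1) i j)
    {a b : E} (ha : a ∈ OE p E α) (hb : b ∈ OE p E α)
    {c d : E} (hc : c ∈ OE p E α) (hd : d ∈ OE p E α)
    {ν : E} (hν : ν = c * conj c - (pE p E)⁻¹ * (d * conj d))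
    {v : Fin 2 → E} (hv : v = ![(pE p E)⁻¹ ^ k * a, (pE p E)⁻¹ ^ k * b])
    {b₁ : Matrix (Fin 2) (Fin 2) E}
    (hb₁ : b₁ = (-(pE p E ^ 2 * (pE p E)⁻¹ ^ k * (2 : E)⁻¹ * ν)) •
      !![-((pE p E)⁻¹ ^ (k + 1)) * (conj a * b + a * conj b),
           2 * (pE p E)⁻¹ ^ (k + 1) * (a * conj a);
         -(2 * (pE p E)⁻¹ ^ (k + 1) * (b * conj b)),
           (pE p E)⁻¹ ^ (k + 1) * (a * conj b + conj a * b)]) :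
    b₁.trace = 0 ∧
    ψ ((p : ℚ_[p]) * TrF (trEl E conj (sesqV E conj v (cay (toE p E h) *ᵥ v) * ν))) =
      ψ (TrF (b₁ * (toE p E h - 1)).trace) := by
  have hvab : v = (pE p E)⁻¹ ^ k • ![a, b] := by simp [hv]
  have hbμ : b₁ = -(pE p E * 2⁻¹ * ν) • momentMatrix conj v := by
    rw [hb₁, smul_eq_smul_momentMatrix, hvab]
  refine ⟨by rw [hbμ, trace_smul, trace_momentMatrix, smul_zero], ?_⟩
  obtain ⟨G, hG⟩ : ∃ G, (h : Matrix (Fin 2) (Fin 2) ℤ_[p]) = 1 + G :=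
    ⟨h - 1, (add_sub_cancel _ _).symm⟩
  rw [hG, add_sub_cancel_left] at hh
  have hdet : (1 + G).det = 1 := hG ▸ h.det_coe
  obtain ⟨m, hm⟩ := exists_quaternionNorm_eq hα hconj hc hd
  obtain ⟨s, hs⟩ := exists_trace_momentMatrix_mul_eq hα hconj ha hb hh
  obtain ⟨r, hr⟩ := exists_two_div_four_sub_expansion (m := m) (s := s) hpk
    (sq_dvd_det_fin_two hh) rfl rfl
  rw [← hν] at hm
  rw [← hvab] at hs
  have htr : (b₁ * toE p E G).trace = algebraMap ℚ_[p] E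
      (-(p * 2⁻¹ * ((p : ℚ_[p])⁻¹ * m)) * ((p : ℚ_[p])⁻¹ ^ (2 * k) * (p ^ (k + 1) * s))) := by
    rw [hbμ, Matrix.smul_mul, trace_smul, hs, hm, pE, smul_eq_mul]
    simp only [map_mul, map_neg, map_inv₀, map_ofNat]
  rw [hG, hm, trEl_sesqV_cay_mul conj hdet hs, toE_one_add, add_sub_cancel_left, htr, hTrF, hTrF,
    hr, AddChar.map_add_eq_mul, hψ, mul_one]

/-- for `k ≥ 1`, `h ∈ SL₂(ℤ_p)` with `h - 1 ∈ p^{k+1}·M₂(ℤ_p)`,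
`v = (p^{-k}a, p^{-k}b)` with `a, b ∈ O_E`, `w = c + p⁻¹·d·δ` with `c, d ∈ O_E`, and
`ν = N_{D/F}(w) = c·c̄ - p⁻¹·d·d̄`, one has
`χ(Tr_{E/F}(⟨v, c(h)v⟩·ν)) = ψ(tr(b₁·(h - 1)))` where `χ(t) = ψ(p·t)` and `b₁` is the
traceless matrix
`b₁ = -(p^{-k+2}/2)·ν·!![-p^{-k-1}(āb + ab̄), 2p^{-k-1}aā; -2p^{-k-1}bb̄, p^{-k-1}(ab̄ + āb)]`. -/
theorem stmt16 (p : ℕ) [Fact p.Prime] (hp : p ≠ 2)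
    (z : ℤ_[p]ˣ) (hz : ¬ ∃ w : ℤ_[p], w * w = (z : ℤ_[p]))
    (E : Type) [Field E] [Algebra ℚ_[p] E] (α : E)
    (hα : α * α = algebraMap ℚ_[p] E ((z : ℤ_[p]) : ℚ_[p]))
    (hα0 : α ∉ Set.range (algebraMap ℚ_[p] E))
    (hspan : ∀ x : E, ∃ a b : ℚ_[p], x = algebraMap ℚ_[p] E a + algebraMap ℚ_[p] E b * α)
    (conj : E →ₐ[ℚ_[p]] E) (hconj : conj α = -α)
    (TrF : E → ℚ_[p]) (hTrF : ∀ t : ℚ_[p], TrF (algebraMap ℚ_[p] E t) = t)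
    (ψ : AddChar ℚ_[p] ℂˣ)
    (hψ1 : ∀ t : ℤ_[p], ψ ((p : ℚ_[p]) * (t : ℚ_[p])) = 1)
    (hψ2 : ∃ t : ℤ_[p], ψ ((t : ℚ_[p])) ≠ 1)
    (k : ℕ) (hk : 1 ≤ k) (h : Matrix.SpecialLinearGroup (Fin 2) ℤ_[p])
    (hh : ∀ i j : Fin 2,
      ((p : ℤ_[p]) ^ (k + 1)) ∣ ((h : Matrix (Fin 2) (Fin 2) ℤ_[p]) - 1) i j)
    (a b : E) (ha : a ∈ OE p E α) (hb : b ∈ OE p E α)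
    (c d : E) (hc : c ∈ OE p E α) (hd : d ∈ OE p E α)
    (ν : E) (hν : ν = c * conj c - (pE p E)⁻¹ * (d * conj d))
    (v : Fin 2 → E) (hv : v = ![(pE p E)⁻¹ ^ k * a, (pE p E)⁻¹ ^ k * b])
    (b₁ : Matrix (Fin 2) (Fin 2) E)
    (hb₁ : b₁ = (-(pE p E ^ 2 * ((pE p E)⁻¹) ^ k * (2 : E)⁻¹ * ν)) •
      !![-(((pE p E)⁻¹) ^ (k + 1)) * (conj a * b + a * conj b),
           2 * ((pE p E)⁻¹) ^ (k + 1) * (a * conj a);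
         -(2 * ((pE p E)⁻¹) ^ (k + 1) * (b * conj b)),
           ((pE p E)⁻¹) ^ (k + 1) * (a * conj b + conj a * b)]) :
    Matrix.trace b₁ = 0 ∧
    ψ ((p : ℚ_[p]) * TrF (trEl E conj
        (sesqV E conj v ((cay (toE p E (h : Matrix (Fin 2) (Fin 2) ℤ_[p]))).mulVec v) * ν)))
      = ψ (TrF (Matrix.trace (b₁ * (toE p E (h : Matrix (Fin 2) (Fin 2) ℤ_[p]) - 1)))) := by
  exact stmt16_general hα hconj hTrF hψ1 (.inl hp) h hh ha hb hc hd hν hv hb₁
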